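/- For every natural number m, there exists a natural number i such that G_i m = 0; that is, every Ackermannian Goodstein sequence terminates. -/

import Mathlib

/-- The base-`k` Ackermann function `A_a(k, b)`:
`A_0(k, b) = k ^ b` and `A_{a+1}(k, b) = A_a^k(k, A_{a+1}(k, b-1))`,
with the auxiliary value `A_{a+1}(k, -1) = 1`
(equivalently, `A_{a+1}(k, b) = (A_a^k)^[b+1] (1)`). -/
def Ack (k : ℕ) : ℕ → ℕ → ℕ
  | 0, b => k ^ b
  | a + 1, b => ((Ack k a)^[k])^[b + 1] 1

/-- `IsSandwich k m n a b ms` says that `(A_{a i}(k, b i))_{i=1}^n` is a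
`k`-sandwiching sequence for `m`, with sandwiching values `(ms i)_{i=0}^n`:
`ms 0 = 0`; for each `i < n`, `A_{a (i+1)} (ms i) ≤ m < A_{a (i+1) + 1} (ms i)`,
`A_{a (i+1)} (b (i+1)) ≤ m < A_{a (i+1)} (b (i+1) + 1)`, and
`ms (i+1) = A_{a (i+1)} (b (i+1))`; and `A_0 (ms n) > m`. -/
structure IsSandwich (k m n : ℕ) (a b ms : ℕ → ℕ) : Prop where
  ms_zero : ms 0 = 0
  idx_lo : ∀ i < n, Ack k (a (i + 1)) (ms i) ≤ m
  idx_hi : ∀ i < n, m < Ack k (a (i + 1) + 1) (ms i)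
  arg_lo : ∀ i < n, Ack k (a (i + 1)) (b (i + 1)) ≤ m
  arg_hi : ∀ i < n, m < Ack k (a (i + 1)) (b (i + 1) + 1)
  ms_succ : ∀ i < n, ms (i + 1) = Ack k (a (i + 1)) (b (i + 1))
  halt : m < Ack k 0 (ms n)

/-- `NF k m a b c` says that `m ≡_k A_a b + c`, i.e. `m` has `k`-normal form
`A_a b + c` (so `m = A_a b + c` and the `k`-sandwiching sequence of `m` ends
with the pair `(a, b)`). -/
def NF (k m a b c : ℕ) : Prop :=
  m = Ack k a b + c ∧
    ∃ n as bs ms, 1 ≤ n ∧ IsSandwich k m n as bs ms ∧ a = as n ∧ b = bs n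

/-- `BCH k l m v` is the graph of the base-change operation `⟨k→l⟩`:
`⟨k→l⟩0 = 0` and, for `m ≡_k A_a(k, b) + c`,
`⟨k→l⟩m = A_{⟨k→l⟩a}(l, ⟨k→l⟩b) + ⟨k→l⟩c`. -/
inductive BCH (k l : ℕ) : ℕ → ℕ → Prop
  | zero : BCH k l 0 0
  | step (m a b c a' b' c' : ℕ) : NF k m a b c →
      BCH k l a a' → BCH k l b b' → BCH k l c c' →
      BCH k l m (Ack l a' b' + c')


/-- `AckGoodstein m i v` says that the `i`-th term `G_i m` of the Ackermannian
Goodstein sequence starting at `m` is defined and equals `v`: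
`G_0 m = m` and, whenever `G_i m > 0`, `G_{i+1} m = ⟨(i+2)→(i+3)⟩(G_i m) - 1`. -/
inductive AckGoodstein (m : ℕ) : ℕ → ℕ → Prop
  | zero : AckGoodstein m 0 m
  | step (i v w : ℕ) : AckGoodstein m i v → 0 < v →
      BCH (i + 2) (i + 3) v w → AckGoodstein m (i + 1) (w - 1)

/-!
Hereditary `k`-normal forms are read as ordinals by means of the Veblen functions, sending
`m ≡_k A_a(k, b) + c` to `φ_{o(a)}(o(b) + 1) + o(c)`. This assignment is strictly increasing in
`m`: leading terms are compared just like values of the Veblen functions, the decisive case being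
that `A_a(k, b) ≤ A_d(k, e)` with `d < a` forces `A_a(k, b) ≤ e` for normal forms. Base change sends
normal forms to normal forms, since the bounds defining them are iterates of `A_a(k, ·)`, with which
it commutes as long as these are in normal form. Hence it leaves the ordinal unchanged, and the
subtraction of `1` makes the ordinals along a Goodstein sequence decrease.
-/

theorem exists_le_lt_succ_of_strictMono {f : ℕ → ℕ} (hf : StrictMono f) {m : ℕ} (h : f 0 ≤ m) :
    ∃ n, f n ≤ m ∧ m < f (n + 1) :=
  Order.IsNormal.exists_map_le_lt_map_succ
    ⟨hf, fun ha => (Order.not_isSuccLimit_of_isSuccArchimedean ha).elim⟩ h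

theorem Ack.zero_left (k b : ℕ) : Ack k 0 b = k ^ b := by
  rw [Ack]

theorem Ack.succ_left (k a b : ℕ) : Ack k (a + 1) b = (Ack k a)^[k * (b + 1)] 1 := by
  rw [Ack, Function.iterate_mul]

theorem Ack.succ_left_zero (k a : ℕ) : Ack k (a + 1) 0 = (Ack k a)^[k] 1 := by
  rw [Ack.succ_left, zero_add, mul_one]

theorem Ack.succ_left_add (k a b n : ℕ) :
    Ack k (a + 1) (b + n) = (Ack k a)^[k * n] (Ack k (a + 1) b) := by
  rw [Ack.succ_left, Ack.succ_left, ← Function.iterate_add_apply]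
  congr 2
  ring

section Ack

variable (k : ℕ) [k.AtLeastTwo]

theorem Ack.strictMono_and_self_lt (a : ℕ) :
    StrictMono (Ack k a) ∧ ∀ x, x < Ack k a x := by
  have hk : 1 < k := Nat.AtLeastTwo.one_lt
  induction a with
  | zero =>
    simp only [StrictMono, Ack.zero_left]
    exact ⟨fun _ _ h => Nat.pow_lt_pow_right hk h, fun x => Nat.lt_pow_self hk⟩
  | succ a ih =>
    have hiter : StrictMono fun n => (Ack k a)^[n] 1 :=
      ih.1.strictMono_iterate_of_lt_map (ih.2 1)
    simp only [StrictMono, Ack.succ_left]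
    refine ⟨fun x y hxy => hiter (by gcongr), fun x => ?_⟩
    calc x < k * (x + 1) := by nlinarith
      _ ≤ (Ack k a)^[k * (x + 1)] 1 := hiter.le_apply

theorem Ack.strictMono (a : ℕ) : StrictMono (Ack k a) :=
  (Ack.strictMono_and_self_lt k a).1

theorem Ack.self_lt (a x : ℕ) : x < Ack k a x :=
  (Ack.strictMono_and_self_lt k a).2 x

theorem Ack.strictMono_iterate (a x : ℕ) :
    StrictMono fun n => (Ack k a)^[n] x :=
  (Ack.strictMono k a).strictMono_iterate_of_lt_map (Ack.self_lt k a x)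

theorem Ack.exists_succ_left_eq (a x : ℕ) : ∃ y, x < y ∧ Ack k (a + 1) x = Ack k a y := by
  have hk : 1 < k := Nat.AtLeastTwo.one_lt
  obtain ⟨n, hn⟩ : ∃ n, k * (x + 1) = n + 1 :=
    Nat.exists_eq_succ_of_ne_zero (Nat.mul_pos (by omega) x.succ_pos).ne'
  refine ⟨(Ack k a)^[n] 1, ?_, by rw [Ack.succ_left, hn, Function.iterate_succ_apply']⟩
  calc x < n := by nlinarith
    _ ≤ (Ack k a)^[n] 1 := (Ack.strictMono_iterate k a 1).le_apply

theorem Ack.strictMono_left (x : ℕ) : StrictMono fun a => Ack k a x :=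
  strictMono_nat_of_lt_succ fun a => by
    obtain ⟨y, hxy, hy⟩ := Ack.exists_succ_left_eq k a x
    exact hy ▸ Ack.strictMono k a hxy

theorem Ack.left_lt (a x : ℕ) : a < Ack k a x :=
  calc a < a + Ack k 0 x := Nat.lt_add_of_pos_right (x.zero_le.trans_lt (Ack.self_lt k 0 x))
    _ ≤ Ack k a x := (Ack.strictMono_left k x).add_le_nat a 0

theorem Ack.two_mul_le (a x : ℕ) : 2 * x ≤ Ack k a x :=
  calc 2 * x ≤ 2 ^ x := by
        cases x with
        | zero => simp
        | succ x =>
          have := Nat.lt_two_pow_self (n := x)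
          omega
    _ ≤ k ^ x := Nat.pow_le_pow_left Nat.AtLeastTwo.prop x
    _ = Ack k 0 x := (Ack.zero_left k x).symm
    _ ≤ Ack k a x := (Ack.strictMono_left k x).monotone a.zero_le

variable {k}

theorem Ack.le_ack {a d x y : ℕ} (had : a ≤ d) (hxy : x ≤ y) : Ack k a x ≤ Ack k d y :=
  ((Ack.strictMono_left k x).monotone had).trans ((Ack.strictMono k d).monotone hxy)

theorem Ack.le_of_base_le {l : ℕ} [l.AtLeastTwo] (hkl : k ≤ l) (a x : ℕ) :
    Ack k a x ≤ Ack l a x := by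
  induction a generalizing x with
  | zero => simpa only [Ack.zero_left] using Nat.pow_le_pow_left hkl x
  | succ a ih =>
    simp only [Ack.succ_left]
    calc (Ack k a)^[k * (x + 1)] 1 ≤ (Ack l a)^[k * (x + 1)] 1 :=
          (Ack.strictMono k a).monotone.iterate_le_of_le ih _ 1
      _ ≤ (Ack l a)^[l * (x + 1)] 1 := (Ack.strictMono_iterate l a 1).monotone (by gcongr)

theorem Ack.two_mul_le_of_base_lt {l : ℕ} [l.AtLeastTwo] (hkl : k < l) {a : ℕ} (ha : a ≠ 0)
    (x : ℕ) : 2 * Ack k a x ≤ Ack l a x := by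
  obtain ⟨a, rfl⟩ := Nat.exists_eq_succ_of_ne_zero ha
  simp only [Ack.succ_left]
  calc 2 * (Ack k a)^[k * (x + 1)] 1 ≤ 2 * (Ack l a)^[k * (x + 1)] 1 := by
        gcongr
        exact (Ack.strictMono k a).monotone.iterate_le_of_le (Ack.le_of_base_le hkl.le a) _ 1
    _ ≤ Ack l a ((Ack l a)^[k * (x + 1)] 1) := Ack.two_mul_le l a _
    _ = (Ack l a)^[k * (x + 1) + 1] 1 := (Function.iterate_succ_apply' ..).symm
    _ ≤ (Ack l a)^[l * (x + 1)] 1 := (Ack.strictMono_iterate l a 1).monotone (by nlinarith)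

theorem Ack.exists_eq_of_le {a d : ℕ} (had : a ≤ d) (e : ℕ) : ∃ x, Ack k a x = Ack k d e := by
  induction d, had using Nat.le_induction generalizing e with
  | base => exact ⟨e, rfl⟩
  | succ d _ ih =>
    obtain ⟨y, -, hy⟩ := Ack.exists_succ_left_eq k d e
    exact hy ▸ ih y

theorem Ack.right_succ_le_of_lt {a b d e : ℕ} (had : a ≤ d) (hlt : Ack k a b < Ack k d e) :
    Ack k a (b + 1) ≤ Ack k d e := by
  obtain ⟨x, hx⟩ := Ack.exists_eq_of_le (k := k) had e
  rw [← hx] at hlt ⊢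
  exact (Ack.strictMono k a).monotone ((Ack.strictMono k a).lt_iff_lt.1 hlt)

theorem Ack.comp_le {a d : ℕ} (had : a < d) (e : ℕ) :
    Ack k a (Ack k d e) ≤ Ack k d (e + 1) := by
  obtain ⟨d, rfl⟩ := Nat.exists_eq_succ_of_ne_zero had.ne_bot
  calc Ack k a (Ack k (d + 1) e) ≤ (Ack k d)^[1] (Ack k (d + 1) e) :=
        Ack.le_ack (Nat.lt_succ_iff.1 had) le_rfl
    _ ≤ (Ack k d)^[k * 1] (Ack k (d + 1) e) :=
        (Ack.strictMono_iterate k d _).monotone (by have := NeZero.pos k; omega)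
    _ = Ack k (d + 1) (e + 1) := (Ack.succ_left_add ..).symm

theorem Ack.right_le_of_le_of_lt {a b x m : ℕ} (hx : Ack k a x ≤ m) (hb : m < Ack k a (b + 1)) :
    x ≤ b :=
  Nat.lt_succ_iff.1 ((Ack.strictMono k a).lt_iff_lt.1 (hx.trans_lt hb))

end Ack

/-- One step of a `k`-sandwiching sequence for `m`: the passage from the sandwiching value `s` to
the sandwiching value `A_a(k, b)`. -/
structure SandwichStep (k m s a b : ℕ) : Prop where
  idx_lo : Ack k a s ≤ m
  idx_hi : m < Ack k (a + 1) s
  arg_lo : Ack k a b ≤ m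
  arg_hi : m < Ack k a (b + 1)

/-- The pairs `(a, b)` occurring in the `k`-sandwiching sequence of `m`, generated by its steps;
unlike `IsSandwich` this avoids infinite sequences of which only an initial part matters. -/
inductive SandwichPair (k m : ℕ) : ℕ → ℕ → Prop
  | first {a b : ℕ} : SandwichStep k m 0 a b → SandwichPair k m a b
  | next {d e a b : ℕ} : SandwichPair k m d e → SandwichStep k m (Ack k d e) a b →
      SandwichPair k m a b

/-- The sandwiching values `m_0 = 0` and `m_{i+1} = A_{a_{i+1}}(k, b_{i+1})` determined by the
pairs of a sandwiching sequence. -/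
def sandwichValue (k : ℕ) (as bs : ℕ → ℕ) : ℕ → ℕ
  | 0 => 0
  | i + 1 => Ack k (as (i + 1)) (bs (i + 1))

theorem IsSandwich.step {k m n : ℕ} {as bs ms : ℕ → ℕ} (h : IsSandwich k m n as bs ms) {i : ℕ}
    (hi : i < n) : SandwichStep k m (ms i) (as (i + 1)) (bs (i + 1)) :=
  ⟨h.idx_lo i hi, h.idx_hi i hi, h.arg_lo i hi, h.arg_hi i hi⟩

theorem IsSandwich.sandwichPair {k m n : ℕ} {as bs ms : ℕ → ℕ} (h : IsSandwich k m n as bs ms)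
    {i : ℕ} (hi : i < n) : SandwichPair k m (as (i + 1)) (bs (i + 1)) := by
  induction i with
  | zero =>
    have hstep := h.step hi
    rw [h.ms_zero] at hstep
    exact .first hstep
  | succ i ih =>
    have hi' : i < n := Nat.lt_of_succ_lt hi
    exact .next (ih hi') (h.ms_succ i hi' ▸ h.step hi)

theorem SandwichPair.exists_seq {k m a b : ℕ} (h : SandwichPair k m a b) :
    ∃ (n : ℕ) (as bs : ℕ → ℕ),
      (∀ i ≤ n, SandwichStep k m (sandwichValue k as bs i) (as (i + 1)) (bs (i + 1))) ∧
        as (n + 1) = a ∧ bs (n + 1) = b := by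
  induction h with
  | @first a b h => exact ⟨0, fun _ => a, fun _ => b, by simpa [sandwichValue] using h, rfl, rfl⟩
  | @next d e a b _ hlast ih =>
    obtain ⟨n, as, bs, hsteps, rfl, rfl⟩ := ih
    refine ⟨n + 1, Function.update as (n + 2) a, Function.update bs (n + 2) b, fun i hi => ?_,
      by simp, by simp⟩
    have hvalue : sandwichValue k (Function.update as (n + 2) a) (Function.update bs (n + 2) b) i =
        sandwichValue k as bs i := by
      cases i with
      | zero => rfl
      | succ i => grind [sandwichValue]
    rw [hvalue]
    rcases Nat.le_succ_iff.1 hi with hi | rfl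
    · simpa [show i ≠ n + 1 by omega] using hsteps i hi
    · simpa [sandwichValue] using hlast

theorem nf_iff {k m a b c : ℕ} :
    NF k m a b c ↔ m = Ack k a b + c ∧ SandwichPair k m a b ∧ m < k ^ Ack k a b := by
  refine and_congr_right fun _ => ⟨?_, fun ⟨hpair, hlt⟩ => ?_⟩
  · rintro ⟨n, as, bs, ms, hn, h, rfl, rfl⟩
    obtain ⟨n, rfl⟩ := Nat.exists_eq_succ_of_ne_zero (Nat.one_le_iff_ne_zero.1 hn)
    refine ⟨h.sandwichPair n.lt_succ_self, ?_⟩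
    rw [← h.ms_succ n n.lt_succ_self, ← Ack.zero_left]
    exact h.halt
  · obtain ⟨n, as, bs, hsteps, rfl, rfl⟩ := hpair.exists_seq
    have hsteps' i (hi : i < n + 1) := hsteps i (Nat.lt_succ_iff.1 hi)
    exact ⟨n + 1, as, bs, sandwichValue k as bs, n.succ_pos,
      { ms_zero := rfl
        idx_lo := fun i hi => (hsteps' i hi).idx_lo
        idx_hi := fun i hi => (hsteps' i hi).idx_hi
        arg_lo := fun i hi => (hsteps' i hi).arg_lo
        arg_hi := fun i hi => (hsteps' i hi).arg_hi
        ms_succ := fun _ _ => rfl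
        halt := by rwa [Ack.zero_left] }, rfl, rfl⟩

theorem SandwichPair.arg_lo {k m a b : ℕ} (h : SandwichPair k m a b) : Ack k a b ≤ m := by
  cases h with
  | first h | next _ h => exact h.arg_lo

theorem SandwichPair.arg_hi {k m a b : ℕ} (h : SandwichPair k m a b) : m < Ack k a (b + 1) := by
  cases h with
  | first h | next _ h => exact h.arg_hi

theorem NF.eq_add {k m a b c : ℕ} (h : NF k m a b c) : m = Ack k a b + c := h.1

theorem NF.sandwichPair {k m a b c : ℕ} (h : NF k m a b c) : SandwichPair k m a b :=
  (nf_iff.1 h).2.1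

theorem NF.lt_pow {k m a b c : ℕ} (h : NF k m a b c) : m < k ^ Ack k a b :=
  (nf_iff.1 h).2.2

theorem NF.ack_le {k m a b c : ℕ} (h : NF k m a b c) : Ack k a b ≤ m :=
  h.sandwichPair.arg_lo

section NormalForm

variable {k : ℕ} [k.AtLeastTwo]

theorem SandwichStep.le_right {m s a b : ℕ} (h : SandwichStep k m s a b) : s ≤ b :=
  Ack.right_le_of_le_of_lt h.idx_lo h.arg_hi

theorem SandwichStep.of_le_of_lt {m n s a b : ℕ} (h : SandwichStep k n s a b)
    (hlo : Ack k a b ≤ m) (hhi : m < Ack k a (b + 1)) : SandwichStep k m s a b where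
  idx_lo := (Ack.le_ack le_rfl h.le_right).trans hlo
  idx_hi := hhi.trans_le (Ack.right_succ_le_of_lt a.le_succ (h.arg_lo.trans_lt h.idx_hi))
  arg_lo := hlo
  arg_hi := hhi

theorem SandwichPair.left_lt {m d e a : ℕ} (h : SandwichPair k m d e)
    (ha : Ack k a (Ack k d e) ≤ m) : a < d := by
  by_contra! hda
  have : Ack k d (e + 1) ≤ Ack k a (Ack k d e) := Ack.le_ack hda (Ack.self_lt k d e)
  exact (this.trans ha).not_gt h.arg_hi

theorem SandwichPair.of_le_of_lt {m n a b : ℕ} (h : SandwichPair k n a b)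
    (hlo : Ack k a b ≤ m) (hhi : m < Ack k a (b + 1)) : SandwichPair k m a b := by
  induction h with
  | first h => exact .first (h.of_le_of_lt hlo hhi)
  | @next d e a b hprev h ih =>
    have had : a < d := hprev.left_lt h.idx_lo
    refine .next (ih ?_ ?_) (h.of_le_of_lt hlo hhi)
    · exact (h.le_right.trans (Ack.self_lt k a b).le).trans hlo
    · exact hhi.trans_le (Ack.right_succ_le_of_lt had.le (h.arg_lo.trans_lt hprev.arg_hi))

theorem SandwichPair.at_ack {m a b : ℕ} (h : SandwichPair k m a b) :
    SandwichPair k (Ack k a b) a b :=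
  h.of_le_of_lt le_rfl (Ack.strictMono k a b.lt_succ_self)

/- If the predecessor `(d, e)` of `(a₁, b₁)` has `a < d`, the claim is applied with the roles of the
two pairs exchanged, giving `A_d(k, e) ≤ b`. The index always increases, which is why the recursion
terminates. -/
theorem SandwichPair.ack_le_right {m a₁ b₁ a b : ℕ} (h₁ : SandwichPair k m a₁ b₁)
    (h : SandwichPair k (Ack k a b) a b) (hm : Ack k a b ≤ m) (ha : a₁ < a) :
    Ack k a b ≤ b₁ := by
  have : a < Ack k a b := Ack.left_lt k a b
  match h₁ with
  | .first hstep =>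
    have : Ack k (a₁ + 1) 0 ≤ Ack k a b := Ack.le_ack ha b.zero_le
    exact absurd hstep.idx_hi (this.trans hm).not_gt
  | .next (d := d) (e := e) hprev hstep =>
    have : a₁ < d := hprev.left_lt hstep.idx_lo
    rcases lt_trichotomy d a with hda | rfl | had
    · calc Ack k a b ≤ e := hprev.ack_le_right h hm hda
        _ ≤ Ack k d e := (Ack.self_lt k d e).le
        _ ≤ b₁ := hstep.le_right
    · exact (Ack.le_ack le_rfl (Ack.right_le_of_le_of_lt hm hprev.arg_hi)).trans hstep.le_right
    · by_contra! hb₁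
      have hle : Ack k d e ≤ Ack k a b := hstep.le_right.trans hb₁.le
      have : Ack k (a₁ + 1) (Ack k d e) ≤ Ack k a b :=
        Ack.le_ack ha (h.ack_le_right hprev.at_ack hle had)
      exact (this.trans hm).not_gt hstep.idx_hi
termination_by m - a₁

theorem SandwichPair.nf_ack {m a b : ℕ} (h : SandwichPair k m a b) : NF k (Ack k a b) a b 0 :=
  nf_iff.2 ⟨rfl, h.at_ack, Nat.lt_pow_self Nat.AtLeastTwo.one_lt⟩

theorem NF.of_le {m a b c c' : ℕ} (h : NF k m a b c) (hc : c' ≤ c) :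
    NF k (Ack k a b + c') a b c' := by
  have hle : Ack k a b + c' ≤ m := h.eq_add ▸ Nat.add_le_add_left hc _
  exact nf_iff.2 ⟨rfl, h.sandwichPair.of_le_of_lt (Nat.le_add_right _ _)
    (hle.trans_lt h.sandwichPair.arg_hi), hle.trans_lt h.lt_pow⟩

theorem NF.left_le_left {m a b c a' b' c' : ℕ} (h : NF k m a b c) (h' : NF k m a' b' c') :
    a ≤ a' := by
  by_contra! ha
  have hle : Ack k a b ≤ b' :=
    h'.sandwichPair.ack_le_right h.sandwichPair.at_ack h.sandwichPair.arg_lo ha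
  refine h.lt_pow.not_ge ?_
  calc k ^ Ack k a b = Ack k 0 (Ack k a b) := (Ack.zero_left ..).symm
    _ ≤ Ack k a' b' := Ack.le_ack a'.zero_le hle
    _ ≤ m := h'.sandwichPair.arg_lo

theorem NF.unique {m a b c a' b' c' : ℕ} (h : NF k m a b c) (h' : NF k m a' b' c') :
    a = a' ∧ b = b' ∧ c = c' := by
  obtain rfl : a = a' := le_antisymm (h.left_le_left h') (h'.left_le_left h)
  obtain rfl : b = b' := le_antisymm
    (Ack.right_le_of_le_of_lt h.sandwichPair.arg_lo h'.sandwichPair.arg_hi)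
    (Ack.right_le_of_le_of_lt h'.sandwichPair.arg_lo h.sandwichPair.arg_hi)
  exact ⟨rfl, rfl, Nat.add_left_cancel (h.eq_add.symm.trans h'.eq_add)⟩

theorem exists_sandwichStep {m s : ℕ} (h : k ^ s ≤ m) : ∃ a b, SandwichStep k m s a b := by
  obtain ⟨a, ha, ha'⟩ :=
    exists_le_lt_succ_of_strictMono (Ack.strictMono_left k s) (m := m) (by rwa [Ack.zero_left])
  obtain ⟨b, hb, hb'⟩ := exists_le_lt_succ_of_strictMono (Ack.strictMono k a)
    ((Ack.le_ack le_rfl s.zero_le).trans ha)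
  exact ⟨a, b, ha, ha', hb, hb'⟩

theorem SandwichPair.exists_nf {m d e : ℕ} (h : SandwichPair k m d e) :
    ∃ a b c, NF k m a b c := by
  by_cases hlt : m < k ^ Ack k d e
  · obtain ⟨c, hc⟩ := Nat.exists_eq_add_of_le h.arg_lo
    exact ⟨d, e, c, nf_iff.2 ⟨hc, h, hlt⟩⟩
  · obtain ⟨a, b, hstep⟩ := exists_sandwichStep (not_lt.1 hlt)
    have : Ack k d e < Ack k a b := hstep.le_right.trans_lt (Ack.self_lt k a b)
    have := hstep.arg_lo
    exact SandwichPair.exists_nf (.next h hstep)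
termination_by m - Ack k d e

theorem exists_nf {m : ℕ} (hm : m ≠ 0) : ∃ a b c, NF k m a b c := by
  have hone : k ^ 0 ≤ m := by rwa [pow_zero, Nat.one_le_iff_ne_zero]
  obtain ⟨a, b, h⟩ := exists_sandwichStep hone
  exact (SandwichPair.first h).exists_nf

theorem NF.left_lt {m a b c : ℕ} (h : NF k m a b c) : a < m :=
  (Ack.left_lt k a b).trans_le h.ack_le

theorem NF.right_lt {m a b c : ℕ} (h : NF k m a b c) : b < m :=
  (Ack.self_lt k a b).trans_le h.ack_le

theorem NF.rest_lt {m a b c : ℕ} (h : NF k m a b c) : c < m := by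
  have := Ack.self_lt k a b
  have := h.eq_add
  omega

theorem NF.ne_zero {m a b c : ℕ} (h : NF k m a b c) : m ≠ 0 :=
  h.rest_lt.ne_bot

@[elab_as_elim]
theorem NF.induction (k : ℕ) [k.AtLeastTwo] {motive : ℕ → Prop} (zero : motive 0)
    (add : ∀ m a b c, NF k m a b c → motive a → motive b → motive c → motive m) (m : ℕ) :
    motive m := by
  induction m using Nat.strong_induction_on with
  | _ m ih =>
    rcases eq_or_ne m 0 with rfl | hm
    · exact zero
    · obtain ⟨a, b, c, h⟩ := exists_nf (k := k) hm
      exact add m a b c h (ih a h.left_lt) (ih b h.right_lt) (ih c h.rest_lt)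

/-- Recursion along hereditary `k`-normal forms: `0` is sent to `zero`, and `m ≡_k A_a(k, b) + c`
is sent to `add a' b' c'` with `a'`, `b'`, `c'` the images of `a`, `b`, `c`. -/
noncomputable def nfRec (k : ℕ) [k.AtLeastTwo] {α : Type*} (zero : α) (add : α → α → α → α)
    (m : ℕ) : α :=
  if hm : m = 0 then zero
  else
    have ha := exists_nf (k := k) hm
    have hb := ha.choose_spec
    have hc := hb.choose_spec
    have h := hc.choose_spec
    have := h.left_lt
    have := h.right_lt
    have := h.rest_lt
    add (nfRec k zero add ha.choose) (nfRec k zero add hb.choose) (nfRec k zero add hc.choose)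
termination_by m

theorem nfRec_zero {α : Type*} (zero : α) (add : α → α → α → α) : nfRec k zero add 0 = zero := by
  rw [nfRec, dif_pos rfl]

theorem NF.nfRec_eq {α : Type*} {zero : α} {add : α → α → α → α} {m a b c : ℕ}
    (h : NF k m a b c) :
    nfRec k zero add m = add (nfRec k zero add a) (nfRec k zero add b) (nfRec k zero add c) := by
  have hm : m ≠ 0 := h.ne_zero
  have hchosen := (exists_nf (k := k) hm).choose_spec.choose_spec.choose_spec
  obtain ⟨ha, hb, hc⟩ := h.unique hchosen
  rw [nfRec, dif_neg hm, ha, hb, hc]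

end NormalForm

section Ordinal

open Ordinal

theorem add_lt_veblen {o a x y : Ordinal} (hx : x < veblen o a) (hy : y < veblen o a) :
    x + y < veblen o a := by
  obtain ⟨z, hz⟩ := veblen_mem_range_opow o a
  rw [← hz] at hx hy ⊢
  exact isPrincipal_add_omega0_opow z hx hy

theorem one_lt_veblen_add_one (o a : Ordinal) : 1 < veblen o (a + 1) :=
  (Order.one_le_iff_pos.2 veblen_pos).trans_lt (veblen_right_strictMono o (lt_add_one a))

/-- The ordinal of `m` in base `k`: `0` is sent to `0` and `m ≡_k A_a(k, b) + c` to
`φ_{o(a)}(o(b) + 1) + o(c)`. The shift `o(b) + 1` avoids fixed points, so that `o(b)` is below the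
value even if `b` is itself of the form `A_d(k, e)` with `d > a`. -/
noncomputable def ordinalValue (k : ℕ) [k.AtLeastTwo] : ℕ → Ordinal.{0} :=
  nfRec k 0 fun a b c => veblen a (b + 1) + c

variable {k : ℕ} [k.AtLeastTwo]

theorem ordinalValue_zero : ordinalValue k 0 = 0 :=
  nfRec_zero ..

theorem NF.ordinalValue_eq {m a b c : ℕ} (h : NF k m a b c) :
    ordinalValue k m =
      veblen (ordinalValue k a) (ordinalValue k b + 1) + ordinalValue k c :=
  h.nfRec_eq

theorem NF.ordinalValue_ack {a b : ℕ} (h : NF k (Ack k a b) a b 0) :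
    ordinalValue k (Ack k a b) = veblen (ordinalValue k a) (ordinalValue k b + 1) := by
  rw [h.ordinalValue_eq, ordinalValue_zero, add_zero]

theorem ordinalValue_ack_lt_ordinalValue_ack {a b d e : ℕ} (h : NF k (Ack k a b) a b 0)
    (h' : NF k (Ack k d e) d e 0) (hmono : StrictMonoOn (ordinalValue k) (Set.Iio (Ack k d e)))
    (hlt : Ack k a b < Ack k d e)
    (hb : ordinalValue k b < ordinalValue k (Ack k d e)) :
    ordinalValue k (Ack k a b) < ordinalValue k (Ack k d e) := by
  have ha : a < Ack k d e := h.left_lt.trans hlt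
  rw [h'.ordinalValue_ack] at hb ⊢
  rw [h.ordinalValue_ack, veblen_lt_veblen_iff]
  rcases lt_trichotomy a d with had | rfl | hda
  · exact .inr (.inl ⟨hmono ha h'.left_lt had, add_lt_veblen hb (one_lt_veblen_add_one _ _)⟩)
  · have hbe : b < e := (Ack.strictMono k a).lt_iff_lt.1 hlt
    exact .inl ⟨rfl, by simpa using hmono (h.right_lt.trans hlt) h'.right_lt hbe⟩
  · have hle : Ack k a b ≤ e := h'.sandwichPair.ack_le_right h.sandwichPair hlt.le hda
    refine .inr (.inr ⟨hmono h'.left_lt ha hda, ?_⟩)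
    rw [← h.ordinalValue_ack, Order.lt_add_one_iff]
    exact hmono.monotoneOn hlt h'.right_lt hle

theorem ordinalValue_lt_ordinalValue_ack {m d e : ℕ} (h' : NF k (Ack k d e) d e 0)
    (hmono : StrictMonoOn (ordinalValue k) (Set.Iio (Ack k d e))) (hlt : m < Ack k d e) :
    ordinalValue k m < ordinalValue k (Ack k d e) := by
  induction m using NF.induction k with
  | zero =>
    rw [ordinalValue_zero, h'.ordinalValue_ack]
    exact veblen_pos
  | add m a b c h _ ihb ihc =>
    have hack : NF k (Ack k a b) a b 0 := h.sandwichPair.nf_ack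
    have hb := ihb (h.right_lt.trans hlt)
    have hc := ihc (h.rest_lt.trans hlt)
    have hlead := ordinalValue_ack_lt_ordinalValue_ack hack h' hmono (h.ack_le.trans_lt hlt) hb
    rw [h.ordinalValue_eq, ← hack.ordinalValue_ack]
    rw [h'.ordinalValue_ack] at hc hlead ⊢
    exact add_lt_veblen hlead hc

theorem NF.ordinalValue_lt {m n d e c : ℕ} (h : NF k n d e c)
    (hmono : StrictMonoOn (ordinalValue k) (Set.Iio n)) (hlt : m < n) :
    ordinalValue k m < ordinalValue k n := by
  have hack : NF k (Ack k d e) d e 0 := h.sandwichPair.nf_ack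
  rw [h.ordinalValue_eq, ← hack.ordinalValue_ack]
  rcases lt_or_ge m (Ack k d e) with hm | hm
  · have := ordinalValue_lt_ordinalValue_ack hack (hmono.mono (Set.Iio_subset_Iio h.ack_le)) hm
    exact this.trans_le le_self_add
  · obtain ⟨c', rfl⟩ := Nat.exists_eq_add_of_le hm
    have hc : c' < c := by have := h.eq_add; omega
    rw [(h.of_le hc.le).ordinalValue_eq, ← hack.ordinalValue_ack]
    gcongr
    exact hmono (hc.trans h.rest_lt) h.rest_lt hc

theorem ordinalValue_strictMono : StrictMono (ordinalValue k) := by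
  intro m n hlt
  induction n using Nat.strong_induction_on generalizing m with
  | _ n ih =>
    obtain ⟨d, e, c, h⟩ := exists_nf (k := k) (Nat.ne_zero_of_lt hlt)
    exact h.ordinalValue_lt (fun x _ y hy hxy => ih y hy hxy) hlt

end Ordinal

section BaseChange

/-- The base-change operation `⟨k→l⟩` as a function. -/
noncomputable def baseChange (k l : ℕ) [k.AtLeastTwo] : ℕ → ℕ :=
  nfRec k 0 fun a b c => Ack l a b + c

/-- Applying `⟨k→l⟩` to the components of the `k`-normal form of `m` yields the `l`-normal form of
`⟨k→l⟩m`. -/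
def PreservesNF (k l : ℕ) [k.AtLeastTwo] (m : ℕ) : Prop :=
  ∀ ⦃a b c⦄, NF k m a b c →
    NF l (baseChange k l m) (baseChange k l a) (baseChange k l b) (baseChange k l c)

variable {k l : ℕ} [k.AtLeastTwo]

theorem baseChange_zero : baseChange k l 0 = 0 :=
  nfRec_zero ..

theorem NF.baseChange_eq {m a b c : ℕ} (h : NF k m a b c) :
    baseChange k l m = Ack l (baseChange k l a) (baseChange k l b) + baseChange k l c :=
  h.nfRec_eq

theorem NF.baseChange_ack {a b : ℕ} (h : NF k (Ack k a b) a b 0) :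
    baseChange k l (Ack k a b) = Ack l (baseChange k l a) (baseChange k l b) := by
  rw [h.baseChange_eq, baseChange_zero, add_zero]

theorem bch_baseChange (m : ℕ) : BCH k l m (baseChange k l m) := by
  induction m using NF.induction k with
  | zero =>
    rw [baseChange_zero]
    exact .zero
  | add m a b c h iha ihb ihc => exact h.baseChange_eq ▸ .step m a b c _ _ _ h iha ihb ihc

theorem nf_one : NF k 1 0 0 0 := by
  have hack : Ack k 0 0 = 1 := by rw [Ack.zero_left, pow_zero]
  have hk : 1 < k := Nat.AtLeastTwo.one_lt
  refine nf_iff.2 ⟨by rw [hack], .first ⟨hack.le, ?_, hack.le, ?_⟩, by rwa [hack, pow_one]⟩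
  · exact hack.symm.trans_lt (Ack.strictMono_left k 0 zero_lt_one)
  · rwa [Ack.zero_left, zero_add, pow_one]

theorem baseChange_one : baseChange k l 1 = 1 := by
  rw [nf_one.baseChange_eq, baseChange_zero, Ack.zero_left, pow_zero]

theorem baseChange_iterate {a q N : ℕ}
    (hnf : ∀ j, j + 1 < N → NF k (Ack k a ((Ack k a)^[j] q)) a ((Ack k a)^[j] q) 0)
    {j : ℕ} (hj : j < N) :
    baseChange k l ((Ack k a)^[j] q) = (Ack l (baseChange k l a))^[j] (baseChange k l q) := by
  induction j with
  | zero => rfl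
  | succ j ih =>
    rw [Function.iterate_succ_apply', Function.iterate_succ_apply', (hnf j hj).baseChange_ack,
      ih (Nat.lt_of_succ_lt hj)]

theorem SandwichStep.ack {s a b : ℕ} (hs : s ≤ b) (hlt : Ack k a b < Ack k (a + 1) s) :
    SandwichStep k (Ack k a b) s a b where
  idx_lo := Ack.le_ack le_rfl hs
  idx_hi := hlt
  arg_lo := le_rfl
  arg_hi := Ack.strictMono k a b.lt_succ_self

theorem NF.baseChange_lt_mul {n a b c : ℕ} (h : NF k n a b c)
    (hlt : ∀ r < Ack k a b, baseChange k l r < Ack l (baseChange k l a) (baseChange k l b))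
    {m t : ℕ} (hmn : m ≤ n) (hmt : m < t * Ack k a b) :
    baseChange k l m < t * Ack l (baseChange k l a) (baseChange k l b) := by
  induction t generalizing m with
  | zero => simp at hmt
  | succ t ih =>
    rw [Nat.succ_mul] at hmt ⊢
    rcases lt_or_ge m (Ack k a b) with hm | hm
    · exact (hlt m hm).trans_le (Nat.le_add_left _ _)
    · obtain ⟨r, rfl⟩ := Nat.exists_eq_add_of_le hm
      have hr : r ≤ c := by have := h.eq_add; omega
      have hrt : baseChange k l r < t * Ack l (baseChange k l a) (baseChange k l b) :=
        ih (by omega) (by omega)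
      rw [(h.of_le hr).baseChange_eq]
      omega

variable [l.AtLeastTwo]

theorem le_baseChange (hkl : k ≤ l) (m : ℕ) : m ≤ baseChange k l m := by
  induction m using NF.induction k with
  | zero => exact Nat.zero_le _
  | add m a b c h iha ihb ihc =>
    calc m = Ack k a b + c := h.eq_add
      _ ≤ Ack l a b + c := by gcongr; exact Ack.le_of_base_le hkl a b
      _ ≤ Ack l (baseChange k l a) (baseChange k l b) + baseChange k l c :=
        Nat.add_le_add (Ack.le_ack iha ihb) ihc
      _ = baseChange k l m := h.baseChange_eq.symm

theorem ordinalValue_baseChange_of_preservesNF {m : ℕ} (h : ∀ n ≤ m, PreservesNF k l n) :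
    ordinalValue l (baseChange k l m) = ordinalValue k m := by
  induction m using NF.induction k with
  | zero => rw [baseChange_zero, ordinalValue_zero, ordinalValue_zero]
  | add m a b c hnf iha ihb ihc =>
    rw [(h m le_rfl hnf).ordinalValue_eq, hnf.ordinalValue_eq,
      iha fun n hn => h n (hn.trans hnf.left_lt.le), ihb fun n hn => h n (hn.trans hnf.right_lt.le),
      ihc fun n hn => h n (hn.trans hnf.rest_lt.le)]

theorem baseChange_lt_baseChange_of_preservesNF {m n : ℕ} (h : ∀ x ≤ n, PreservesNF k l x)
    (hlt : m < n) : baseChange k l m < baseChange k l n := by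
  rw [← (ordinalValue_strictMono (k := l)).lt_iff_lt, ordinalValue_baseChange_of_preservesNF h,
    ordinalValue_baseChange_of_preservesNF fun x hx => h x (hx.trans hlt.le)]
  exact ordinalValue_strictMono hlt

theorem ack_baseChange_lt_iterate {a b q N : ℕ}
    (hmono : StrictMonoOn (baseChange k l) (Set.Iio (Ack k a b)))
    (hnf : ∀ j, j + 1 < N → NF k (Ack k a ((Ack k a)^[j] q)) a ((Ack k a)^[j] q) 0)
    (hqb : q ≤ b) (hlt : Ack k a b < (Ack k a)^[N] q) :
    Ack l (baseChange k l a) (baseChange k l b) <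
      (Ack l (baseChange k l a))^[N] (baseChange k l q) := by
  have hiter := Ack.strictMono_iterate l (baseChange k l a) (baseChange k l q)
  obtain ⟨j, hjb, hbj⟩ := exists_le_lt_succ_of_strictMono (Ack.strictMono_iterate k a q) hqb
  have hsucc : (Ack k a)^[j + 1] q = Ack k a ((Ack k a)^[j] q) := Function.iterate_succ_apply' ..
  have hjN : j + 1 < N := by
    refine (Ack.strictMono_iterate k a q).lt_iff_lt.1 (lt_of_le_of_lt ?_ hlt)
    exact hsucc ▸ Ack.le_ack le_rfl hjb
  rcases hjb.eq_or_lt with rfl | hjb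
  · rw [baseChange_iterate hnf (Nat.lt_of_succ_lt hjN), ← Function.iterate_succ_apply' (Ack l _)]
    exact hiter hjN
  · have hb : baseChange k l b < (Ack l (baseChange k l a))^[j + 1] (baseChange k l q) := by
      rw [← baseChange_iterate hnf hjN]
      exact hmono (Ack.self_lt k a b) (hsucc ▸ Ack.strictMono k a hjb) hbj
    calc Ack l (baseChange k l a) (baseChange k l b)
        < (Ack l (baseChange k l a))^[j + 1 + 1] (baseChange k l q) := by
          rw [Function.iterate_succ_apply']
          exact Ack.strictMono l _ hb
      _ ≤ (Ack l (baseChange k l a))^[N] (baseChange k l q) := hiter.monotone hjN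

theorem ack_baseChange_lt_succ_left_zero (hkl : k ≤ l) {a b : ℕ}
    (hmono : StrictMonoOn (baseChange k l) (Set.Iio (Ack k a b)))
    (hlt : Ack k a b < Ack k (a + 1) 0) :
    Ack l (baseChange k l a) (baseChange k l b) < Ack l (baseChange k l a + 1) 0 := by
  rcases b.eq_zero_or_pos with rfl | hb
  · rw [baseChange_zero]
    exact Ack.strictMono_left l 0 (Nat.lt_succ_self _)
  rw [Ack.succ_left_zero] at hlt ⊢
  have hnf j (hj : j + 1 < k) : NF k (Ack k a ((Ack k a)^[j] 1)) a ((Ack k a)^[j] 1) 0 := by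
    refine (SandwichPair.first (.ack (Nat.zero_le _) ?_)).nf_ack
    rw [← Function.iterate_succ_apply' (Ack k a), Ack.succ_left_zero]
    exact Ack.strictMono_iterate k a 1 hj
  calc Ack l (baseChange k l a) (baseChange k l b)
      < (Ack l (baseChange k l a))^[k] (baseChange k l 1) :=
        ack_baseChange_lt_iterate hmono hnf hb hlt
    _ = (Ack l (baseChange k l a))^[k] 1 := by rw [baseChange_one]
    _ ≤ (Ack l (baseChange k l a))^[l] 1 := (Ack.strictMono_iterate l _ 1).monotone hkl

theorem ack_baseChange_lt_succ_left_add (hkl : k ≤ l) {a b d e x y n : ℕ}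
    (hmono : StrictMonoOn (baseChange k l) (Set.Iio (Ack k a b)))
    (hprev : NF k (Ack k d e) d e 0) (hqb : Ack k d e ≤ b)
    (hx : Ack k (a + 1) x = Ack k d e)
    (hy : Ack l (baseChange k l a + 1) y = baseChange k l (Ack k d e))
    (hxn : x + n ≤ Ack k d e) (hn : Ack k (a + 1) (x + n) ≤ Ack k d (e + 1))
    (hlt : Ack k a b < Ack k (a + 1) (x + n)) :
    Ack l (baseChange k l a) (baseChange k l b) < Ack l (baseChange k l a + 1) (y + n) := by
  have hiter := Ack.strictMono_iterate k a (Ack k d e)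
  have hadd : Ack k (a + 1) (x + n) = (Ack k a)^[k * n] (Ack k d e) := by
    rw [Ack.succ_left_add, hx]
  have hnf j (hj : j + 1 < k * n) :
      NF k (Ack k a ((Ack k a)^[j] (Ack k d e))) a ((Ack k a)^[j] (Ack k d e)) 0 := by
    have hle : Ack k d e ≤ (Ack k a)^[j] (Ack k d e) := hiter.monotone j.zero_le
    have hlt' : Ack k a ((Ack k a)^[j] (Ack k d e)) < Ack k (a + 1) (x + n) := by
      rw [hadd, ← Function.iterate_succ_apply' (Ack k a)]
      exact hiter hj
    have hpair : SandwichPair k (Ack k a ((Ack k a)^[j] (Ack k d e))) d e :=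
      hprev.sandwichPair.of_le_of_lt (hle.trans (Ack.self_lt k a _).le) (hlt'.trans_le hn)
    exact (hpair.next (.ack hle (hlt'.trans_le (Ack.le_ack le_rfl hxn)))).nf_ack
  calc Ack l (baseChange k l a) (baseChange k l b)
      < (Ack l (baseChange k l a))^[k * n] (baseChange k l (Ack k d e)) :=
        ack_baseChange_lt_iterate hmono hnf hqb (hadd ▸ hlt)
    _ ≤ (Ack l (baseChange k l a))^[l * n] (baseChange k l (Ack k d e)) :=
        (Ack.strictMono_iterate l _ _).monotone (by gcongr)
    _ = Ack l (baseChange k l a + 1) (y + n) := by rw [Ack.succ_left_add, hy]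

/- For `d ≠ 0` the passage from `k` to `l` at least doubles `A_d(k, e)`. -/
theorem ack_add_le_ack_baseChange (hkl : k < l) {d e s y : ℕ} (hd : d ≠ 0)
    (hy : Ack l s y = Ack l (baseChange k l d) (baseChange k l e)) :
    Ack k d e + y ≤ Ack l (baseChange k l d) (baseChange k l e) := by
  have hleft : 2 * Ack k d e ≤ Ack l (baseChange k l d) (baseChange k l e) :=
    calc 2 * Ack k d e ≤ Ack l d e := Ack.two_mul_le_of_base_lt hkl hd e
      _ ≤ Ack l (baseChange k l d) (baseChange k l e) :=
        Ack.le_ack (le_baseChange hkl.le d) (le_baseChange hkl.le e)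
  have hright : 2 * y ≤ Ack l s y := Ack.two_mul_le l s y
  omega

theorem SandwichStep.ack_baseChange_lt (hkl : k < l) {a b d e : ℕ}
    (hmono : StrictMonoOn (baseChange k l) (Set.Iio (Ack k a b)))
    (hprev : SandwichPair k (Ack k a b) d e)
    (hstep : SandwichStep k (Ack k a b) (Ack k d e) a b) :
    Ack l (baseChange k l a) (baseChange k l b) <
        Ack l (baseChange k l a + 1) (baseChange k l (Ack k d e)) ∧
      Ack l (baseChange k l a) (baseChange k l b) <
        Ack l (baseChange k l d) (baseChange k l e + 1) := by
  have hnf : NF k (Ack k d e) d e 0 := hprev.nf_ack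
  have had : a < d := hprev.left_lt hstep.idx_lo
  have hd : d < Ack k a b := hnf.left_lt.trans (hstep.le_right.trans_lt (Ack.self_lt k a b))
  have had' : baseChange k l a < baseChange k l d := hmono (had.trans hd) hd had
  obtain ⟨y, hy⟩ := Ack.exists_eq_of_le (k := l) had' (baseChange k l e)
  rw [hnf.baseChange_ack]
  rcases Nat.eq_or_lt_of_le had with rfl | had₁
  · have hlt := ack_baseChange_lt_succ_left_add hkl.le hmono hnf hstep.le_right rfl
      (hy.trans hnf.baseChange_ack.symm) (Ack.self_lt k _ e) le_rfl hprev.arg_hi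
    refine ⟨hlt.trans_le (Ack.le_ack le_rfl (hy ▸ Ack.self_lt l _ y)), hlt.trans_le ?_⟩
    exact Ack.right_succ_le_of_lt had' (hy ▸ Ack.strictMono l _ (Nat.lt_succ_self _))
  · obtain ⟨x, hx⟩ := Ack.exists_eq_of_le (k := k) had e
    have hxq : x + (Ack k d e - x) = Ack k d e :=
      Nat.add_sub_of_le (hx ▸ (Ack.self_lt k _ x).le)
    have had₁' : baseChange k l a + 1 < baseChange k l d :=
      (Nat.succ_le_of_lt (hmono (had.trans hd) (had₁.trans hd) a.lt_succ_self)).trans_lt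
        (hmono (had₁.trans hd) hd had₁)
    have hyq : y + (Ack k d e - x) ≤ Ack l (baseChange k l d) (baseChange k l e) := by
      have := ack_add_le_ack_baseChange hkl had.ne_bot hy
      omega
    have hlt := (ack_baseChange_lt_succ_left_add hkl.le hmono hnf hstep.le_right hx
      (hy.trans hnf.baseChange_ack.symm) hxq.le (hxq.symm ▸ Ack.comp_le had₁ e)
      (hxq.symm ▸ hstep.idx_hi)).trans_le (Ack.le_ack le_rfl hyq)
    exact ⟨hlt, hlt.trans_le (Ack.comp_le had₁' _)⟩

theorem NF.ack_baseChange (hkl : k < l) {a b : ℕ} (h : NF k (Ack k a b) a b 0)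
    (ih : ∀ n < Ack k a b, PreservesNF k l n) :
    NF l (Ack l (baseChange k l a) (baseChange k l b)) (baseChange k l a) (baseChange k l b) 0 := by
  have hmono : StrictMonoOn (baseChange k l) (Set.Iio (Ack k a b)) := fun x _ y hy hxy =>
    baseChange_lt_baseChange_of_preservesNF (fun z hz => ih z (hz.trans_lt hy)) hxy
  suffices SandwichPair l (Ack l (baseChange k l a) (baseChange k l b))
    (baseChange k l a) (baseChange k l b) from this.nf_ack
  cases h.sandwichPair with
  | first hstep =>
    exact .first (.ack (Nat.zero_le _) (ack_baseChange_lt_succ_left_zero hkl.le hmono hstep.idx_hi))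
  | @next d e _ _ hprev hstep =>
    obtain ⟨hidx, harg⟩ := hstep.ack_baseChange_lt hkl hmono hprev
    have hnf : NF k (Ack k d e) d e 0 := hprev.nf_ack
    have hq : Ack k d e < Ack k a b := hstep.le_right.trans_lt (Ack.self_lt k a b)
    have hqb : baseChange k l (Ack k d e) ≤ baseChange k l b :=
      hmono.monotoneOn hq (Ack.self_lt k a b) hstep.le_right
    rw [hnf.baseChange_ack] at hidx hqb
    refine .next ((ih _ hq hnf).sandwichPair.of_le_of_lt ?_ harg) (.ack hqb hidx)
    exact hqb.trans (Ack.self_lt l _ _).le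

theorem NF.baseChange_lt (hkl : k < l) {m a b c : ℕ} (h : NF k m a b c)
    (hlt : ∀ r < Ack k a b, baseChange k l r < Ack l (baseChange k l a) (baseChange k l b)) :
    baseChange k l m < Ack l (baseChange k l a) (baseChange k l b + 1) ∧
      baseChange k l m < l ^ Ack l (baseChange k l a) (baseChange k l b) := by
  rcases eq_or_ne a 0 with rfl | ha
  · have hm : m < k * Ack k 0 b := by
      simpa only [Ack.zero_left, pow_succ'] using h.sandwichPair.arg_hi
    have hlt' : baseChange k l m < l ^ (baseChange k l b + 1) :=
      calc baseChange k l m < k * Ack l (baseChange k l 0) (baseChange k l b) :=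
            h.baseChange_lt_mul hlt le_rfl hm
        _ = k * l ^ baseChange k l b := by rw [baseChange_zero, Ack.zero_left]
        _ ≤ l * l ^ baseChange k l b := by gcongr
        _ = l ^ (baseChange k l b + 1) := (pow_succ' ..).symm
    refine ⟨by rwa [baseChange_zero, Ack.zero_left], hlt'.trans_le ?_⟩
    exact Nat.pow_le_pow_right (NeZero.pos l) (Ack.self_lt l _ _)
  · obtain ⟨y, hy⟩ := Ack.exists_eq_of_le (k := l) (baseChange k l a).zero_le (baseChange k l b)
    have hm : m < k ^ Ack k a b * Ack k a b :=
      h.lt_pow.trans_le (Nat.le_mul_of_pos_right _ (Nat.zero_lt_of_lt (Ack.self_lt k a b)))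
    have hpow : baseChange k l m < l ^ Ack l (baseChange k l a) (baseChange k l b) :=
      calc baseChange k l m < k ^ Ack k a b * Ack l (baseChange k l a) (baseChange k l b) :=
            h.baseChange_lt_mul hlt le_rfl hm
        _ ≤ l ^ Ack k a b * l ^ y := by
            rw [← hy, Ack.zero_left]
            gcongr
        _ = l ^ (Ack k a b + y) := (pow_add ..).symm
        _ ≤ l ^ Ack l (baseChange k l a) (baseChange k l b) :=
            Nat.pow_le_pow_right (NeZero.pos l) (ack_add_le_ack_baseChange hkl ha hy)
    refine ⟨hpow.trans_le ?_, hpow⟩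
    rw [← Ack.zero_left]
    exact Ack.comp_le ((Nat.pos_of_ne_zero ha).trans_le (le_baseChange hkl.le a)) _

theorem preservesNF (hkl : k < l) (m : ℕ) : PreservesNF k l m := by
  induction m using Nat.strong_induction_on with
  | _ m ih =>
    intro a b c h
    have hack : NF k (Ack k a b) a b 0 := h.sandwichPair.nf_ack
    have hlead := hack.ack_baseChange hkl fun n hn => ih n (hn.trans_le h.ack_le)
    have hpres : ∀ x ≤ Ack k a b, PreservesNF k l x := by
      intro x hx
      rcases hx.lt_or_eq with hx | rfl
      · exact ih x (hx.trans_le h.ack_le)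
      · intro a' b' c' h'
        obtain ⟨rfl, rfl, rfl⟩ := hack.unique h'
        rwa [hack.baseChange_ack, baseChange_zero]
    have hlt : ∀ r < Ack k a b,
        baseChange k l r < Ack l (baseChange k l a) (baseChange k l b) := fun r hr =>
      hack.baseChange_ack (l := l) ▸ baseChange_lt_baseChange_of_preservesNF hpres hr
    obtain ⟨harg, hpow⟩ := h.baseChange_lt hkl hlt
    have hlo : Ack l (baseChange k l a) (baseChange k l b) ≤ baseChange k l m :=
      h.baseChange_eq (l := l) ▸ Nat.le_add_right _ _
    exact nf_iff.2 ⟨h.baseChange_eq, hlead.sandwichPair.of_le_of_lt hlo harg, hpow⟩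

theorem ordinalValue_baseChange (hkl : k < l) (m : ℕ) :
    ordinalValue l (baseChange k l m) = ordinalValue k m :=
  ordinalValue_baseChange_of_preservesNF fun n _ => preservesNF hkl n

theorem ordinalValue_baseChange_sub_one_lt (hkl : k < l) {m : ℕ} (hm : 0 < m) :
    ordinalValue l (baseChange k l m - 1) < ordinalValue k m := by
  rw [← ordinalValue_baseChange hkl m]
  exact ordinalValue_strictMono (Nat.sub_one_lt_of_lt (hm.trans_le (le_baseChange hkl.le m)))

end BaseChange

theorem AckGoodstein.exists_zero {m i v : ℕ} (h : AckGoodstein m i v) :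
    ∃ j, AckGoodstein m j 0 := by
  rcases v.eq_zero_or_pos with rfl | hv
  · exact ⟨i, h⟩
  · have := ordinalValue_baseChange_sub_one_lt (Nat.lt_succ_self (i + 2)) hv
    exact (h.step i v _ hv (bch_baseChange v)).exists_zero
termination_by ordinalValue (i + 2) v

theorem stmt_19 : ∀ m : ℕ, ∃ i : ℕ, AckGoodstein m i 0 :=
  fun _ => AckGoodstein.zero.exists_zero
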